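/- Step-index Weakening: For all step indices n′ ≤ n and every sensitivity environment Σ: (1) if ρ1 ∼_n^Σ ρ2 then ρ1 ∼_{n′}^Σ ρ2; (2) if σ1 ∼_n^Σ σ2 then σ1 ∼_{n′}^Σ σ2; and (3) if ρ1,σ1,e1 ∼_n^Σ ρ2,σ2,e2 then ρ1,σ1,e1 ∼_{n′}^Σ ρ2,σ2,e2. -/

import Mathlib

namespace DDuo

/-! ### Metrics -/

/-- Metrics: `diff` (absolute difference), `disc` (discrete), `bot`, `top`. -/
inductive Metric : Type
  | diff | disc | bot | top
  deriving DecidableEq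

/-- The partial order `⊑` on metrics: the reflexive order generated by
`bot ⊑ diff ⊑ top` and `bot ⊑ disc ⊑ top`. -/
def Metric.le : Metric → Metric → Prop
  | .bot, _ => True
  | _, .top => True
  | .diff, .diff => True
  | .disc, .disc => True
  | _, _ => False

/-- The join `m1 ⊔ m2` of two metrics. -/
def Metric.join : Metric → Metric → Metric
  | .bot, m => m
  | m, .bot => m
  | .diff, .diff => .diff
  | .disc, .disc => .disc
  | _, _ => .top

/-- The distance relation `r1 ∼_m^q r2` on reals, with extended real bound `q`. -/
def DistRel (m : Metric) (q : EReal) (r1 r2 : ℝ) : Prop :=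
  match m with
  | .diff => ((|r1 - r2| : ℝ) : EReal) ≤ q
  | .disc => (r1 = r2 → (0 : EReal) ≤ q) ∧ (r1 ≠ r2 → (1 : EReal) ≤ q)
  | .bot  => (((|r1 - r2| : ℝ) : EReal) ≤ q) ∧
             ((r1 = r2 → (0 : EReal) ≤ q) ∧ (r1 ≠ r2 → (1 : EReal) ≤ q))
  | .top  => (((|r1 - r2| : ℝ) : EReal) ≤ q) ∨
             ((r1 = r2 → (0 : EReal) ≤ q) ∧ (r1 ≠ r2 → (1 : EReal) ≤ q))

/-! ### Sensitivity environments -/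

/-- Sensitive sources are (a countable set, here) natural numbers. -/
abbrev Source : Type := ℕ

/-- A sensitivity environment maps sources to extended reals
(pointwise sum, scalar multiple, zero via the function-space instances). -/
abbrev SensEnv : Type := Source → EReal

/-- Scalar multiple `r • Σ` of a sensitivity environment. -/
noncomputable def SensEnv.smul (r : ℝ) (S : SensEnv) : SensEnv :=
  fun o => (r : EReal) * S o

/-- Dot product `Σ · Σ′ = ∑ₒ Σ(o) · Σ′(o)`. -/
noncomputable def SensEnv.dot (S1 S2 : SensEnv) : EReal :=
  ∑' o, S1 o * S2 o

/-! ### Syntax -/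

abbrev Var : Type := ℕ
abbrev Loc : Type := ℕ

/-- Expressions. -/
inductive Expr : Type
  | var (x : Var)                       -- variables
  | lit (r : ℝ)                         -- real literals
  | plus (e₁ e₂ : Expr)                 -- e + e
  | timesL (e₁ e₂ : Expr)               -- e ⋉ e  (left argument is the scalar)
  | timesR (e₁ e₂ : Expr)               -- e ⋊ e  (right argument is the scalar)
  | if0 (e₁ e₂ e₃ : Expr)               -- if0(e){e}{e}
  | pair (e₁ e₂ : Expr)                 -- ⟨e,e⟩
  | proj (i : Bool) (e : Expr)          -- π_i(e) (true = first, false = second)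
  | lam (x : Var) (e : Expr)            -- λx.e
  | app (e₁ e₂ : Expr)                  -- e(e)
  | ref (e : Expr)                      -- ref(e)
  | readRef (e : Expr)                  -- !e
  | writeRef (e₁ e₂ : Expr)             -- e ← e

/-- Values: tagged reals `r@_m^Σ`, pairs, closures, and locations. -/
inductive Value : Type
  | real (r : ℝ) (S : SensEnv) (m : Metric)
  | pair (v₁ v₂ : Value)
  | closure (x : Var) (e : Expr) (ρ : Var → Option Value)
  | loc (ℓ : Loc)

/-- Value environments: finite maps from variables to values
(represented as partial functions). -/
abbrev Env : Type := Var → Option Value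

/-- Stores: finite maps from locations to values
(represented as partial functions). -/
abbrev Store : Type := Loc → Option Value

/-- Map update `{x ↦ v} ⊎ ρ`. -/
def upd (ρ : Env) (x : Var) (v : Value) : Env :=
  fun y => if y = x then some v else ρ y

/-- Domain of a partial map. -/
def dom (σ : Store) : Set Loc := {ℓ | σ ℓ ≠ none}

/-- The empty map. -/
def emp : Store := fun _ => none

/-! ### Step-indexed big-step semantics -/

/-- The step-indexed big-step judgment `ρ ⊢ σ,e ⇓ₙ σ′,v`, parameterized by the
allocation function `alloc`. -/
inductive Eval (alloc : Set Loc → Loc) :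
    Env → Store → Expr → ℕ → Store → Value → Prop
  | var {ρ : Env} {σ : Store} {x : Var} {v : Value} :
      ρ x = some v →
      Eval alloc ρ σ (.var x) 0 σ v
  | lit {ρ : Env} {σ : Store} {r : ℝ} :
      Eval alloc ρ σ (.lit r) 0 σ (.real r 0 .disc)
  | lam {ρ : Env} {σ : Store} {x : Var} {e : Expr} :
      Eval alloc ρ σ (.lam x e) 0 σ (.closure x e ρ)
  | plus {ρ : Env} {σ σ' σ'' : Store} {e₁ e₂ : Expr} {n₁ n₂ : ℕ}
      {r₁ r₂ : ℝ} {S₁ S₂ : SensEnv} {m₁ m₂ : Metric} :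
      Eval alloc ρ σ e₁ n₁ σ' (.real r₁ S₁ m₁) →
      Eval alloc ρ σ' e₂ n₂ σ'' (.real r₂ S₂ m₂) →
      Eval alloc ρ σ (.plus e₁ e₂) (n₁ + n₂) σ''
        (.real (r₁ + r₂) (S₁ + S₂) (m₁.join m₂))
  | timesL {ρ : Env} {σ σ' σ'' : Store} {e₁ e₂ : Expr} {n₁ n₂ : ℕ}
      {r₁ r₂ : ℝ} {S₂ : SensEnv} {m₁ m₂ : Metric} :
      Eval alloc ρ σ e₁ n₁ σ' (.real r₁ 0 m₁) →
      Eval alloc ρ σ' e₂ n₂ σ'' (.real r₂ S₂ m₂) →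
      Eval alloc ρ σ (.timesL e₁ e₂) (n₁ + n₂) σ''
        (.real (r₁ * r₂) (SensEnv.smul r₁ S₂) m₂)
  | timesR {ρ : Env} {σ σ' σ'' : Store} {e₁ e₂ : Expr} {n₁ n₂ : ℕ}
      {r₁ r₂ : ℝ} {S₁ : SensEnv} {m₁ m₂ : Metric} :
      Eval alloc ρ σ e₁ n₁ σ' (.real r₁ S₁ m₁) →
      Eval alloc ρ σ' e₂ n₂ σ'' (.real r₂ 0 m₂) →
      Eval alloc ρ σ (.timesR e₁ e₂) (n₁ + n₂) σ''
        (.real (r₁ * r₂) (SensEnv.smul r₂ S₁) m₁)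
  | if0T {ρ : Env} {σ σ' σ'' : Store} {e₁ e₂ e₃ : Expr} {n₁ n₂ : ℕ}
      {r₁ : ℝ} {m₁ : Metric} {v₂ : Value} :
      Eval alloc ρ σ e₁ n₁ σ' (.real r₁ 0 m₁) →
      r₁ = 0 →
      Eval alloc ρ σ' e₂ n₂ σ'' v₂ →
      Eval alloc ρ σ (.if0 e₁ e₂ e₃) (n₁ + n₂) σ'' v₂
  | if0F {ρ : Env} {σ σ' σ'' : Store} {e₁ e₂ e₃ : Expr} {n₁ n₂ : ℕ}
      {r₁ : ℝ} {m₁ : Metric} {v₃ : Value} :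
      Eval alloc ρ σ e₁ n₁ σ' (.real r₁ 0 m₁) →
      r₁ ≠ 0 →
      Eval alloc ρ σ' e₃ n₂ σ'' v₃ →
      Eval alloc ρ σ (.if0 e₁ e₂ e₃) (n₁ + n₂) σ'' v₃
  | pair {ρ : Env} {σ σ' σ'' : Store} {e₁ e₂ : Expr} {n₁ n₂ : ℕ} {v₁ v₂ : Value} :
      Eval alloc ρ σ e₁ n₁ σ' v₁ →
      Eval alloc ρ σ' e₂ n₂ σ'' v₂ →
      Eval alloc ρ σ (.pair e₁ e₂) (n₁ + n₂) σ'' (.pair v₁ v₂)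
  | proj {ρ : Env} {σ σ' : Store} {e : Expr} {n : ℕ} {i : Bool} {v₁ v₂ : Value} :
      Eval alloc ρ σ e n σ' (.pair v₁ v₂) →
      Eval alloc ρ σ (.proj i e) n σ' (cond i v₁ v₂)
  | ref {ρ : Env} {σ σ' : Store} {e : Expr} {n : ℕ} {v : Value} :
      Eval alloc ρ σ e n σ' v →
      Eval alloc ρ σ (.ref e) n (upd σ' (alloc (dom σ')) v) (.loc (alloc (dom σ')))
  | readRef {ρ : Env} {σ σ' : Store} {e : Expr} {n : ℕ} {ℓ : Loc} {v : Value} :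
      Eval alloc ρ σ e n σ' (.loc ℓ) →
      σ' ℓ = some v →
      Eval alloc ρ σ (.readRef e) n σ' v
  | writeRef {ρ : Env} {σ σ' σ'' : Store} {e₁ e₂ : Expr} {n₁ n₂ : ℕ}
      {ℓ : Loc} {v : Value} :
      Eval alloc ρ σ e₁ n₁ σ' (.loc ℓ) →
      Eval alloc ρ σ' e₂ n₂ σ'' v →
      Eval alloc ρ σ (.writeRef e₁ e₂) (n₁ + n₂) (upd σ'' ℓ v) v
  | app {ρ ρ' : Env} {σ σ' σ'' σ''' : Store} {e₁ e₂ e : Expr} {n₁ n₂ n₃ : ℕ}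
      {x : Var} {v v' : Value} :
      Eval alloc ρ σ e₁ n₁ σ' (.closure x e ρ') →
      Eval alloc ρ σ' e₂ n₂ σ'' v →
      Eval alloc (upd ρ' x v) σ'' e n₃ σ''' v' →
      Eval alloc ρ σ (.app e₁ e₂) (n₁ + n₂ + n₃ + 1) σ''' v'

/-! ### Step-indexed logical relations -/

mutual
  /-- The step-indexed logical relation on values, `v₁ ∼ₙ^Σ v₂`. -/
  def ValRel (alloc : Set Loc → Loc) : ℕ → SensEnv → Value → Value → Prop
    | _, S, .real r₁ S₁ m₁, .real r₂ S₂ m₂ =>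
        S₁ = S₂ ∧ m₁ = m₂ ∧ DistRel m₁ (SensEnv.dot S S₁) r₁ r₂
    | n, S, .pair v₁₁ v₁₂, .pair v₂₁ v₂₂ =>
        ValRel alloc n S v₁₁ v₂₁ ∧ ValRel alloc n S v₁₂ v₂₂
    | n, S, .closure x₁ e₁ ρ₁, .closure x₂ e₂ ρ₂ =>
        x₁ = x₂ ∧
        ∀ n' < n, ∀ (v₁ v₂ : Value) (σ₁ σ₂ : Store),
          (∀ ℓ ∈ dom σ₁ ∪ dom σ₂, ∃ w₁ w₂,
            σ₁ ℓ = some w₁ ∧ σ₂ ℓ = some w₂ ∧ ValRel alloc n' S w₁ w₂) →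
          ValRel alloc n' S v₁ v₂ →
          ConfigRel alloc n' S (upd ρ₁ x₁ v₁) σ₁ e₁ (upd ρ₂ x₂ v₂) σ₂ e₂
    | _, _, .loc ℓ₁, .loc ℓ₂ => ℓ₁ = ℓ₂
    | _, _, _, _ => False
  termination_by n _ v₁ _ => (n, 1, sizeOf v₁)

  /-- The step-indexed logical relation on configurations,
  `ρ₁,σ₁,e₁ ∼ₙ^Σ ρ₂,σ₂,e₂`. -/
  def ConfigRel (alloc : Set Loc → Loc) :
      ℕ → SensEnv → Env → Store → Expr → Env → Store → Expr → Prop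
    | 0, _, _, _, _, _, _, _ => True
    | n + 1, S, ρ₁, σ₁, e₁, ρ₂, σ₂, e₂ =>
        ∀ n₁ ≤ n, ∀ (n₂ : ℕ) (σ₁' σ₂' : Store) (v₁ v₂ : Value),
          Eval alloc ρ₁ σ₁ e₁ n₁ σ₁' v₁ →
          Eval alloc ρ₂ σ₂ e₂ n₂ σ₂' v₂ →
          n₁ = n₂ ∧
          (∀ ℓ ∈ dom σ₁' ∪ dom σ₂', ∃ w₁ w₂,
            σ₁' ℓ = some w₁ ∧ σ₂' ℓ = some w₂ ∧ ValRel alloc (n - n₁) S w₁ w₂) ∧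
          ValRel alloc (n - n₁) S v₁ v₂
  termination_by n _ _ _ _ _ _ _ => (n, 0, 0)
end

/-- The step-indexed logical relation on stores, `σ₁ ∼ₙ^Σ σ₂`: every location in
the union of the two domains is defined in both stores and the values are
related. -/
def StoreRel (alloc : Set Loc → Loc) (n : ℕ) (S : SensEnv) (σ₁ σ₂ : Store) : Prop :=
  ∀ ℓ ∈ dom σ₁ ∪ dom σ₂, ∃ w₁ w₂,
    σ₁ ℓ = some w₁ ∧ σ₂ ℓ = some w₂ ∧ ValRel alloc n S w₁ w₂

/-- The step-indexed logical relation on value environments, `ρ₁ ∼ₙ^Σ ρ₂`. -/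
def EnvRel (alloc : Set Loc → Loc) (n : ℕ) (S : SensEnv) (ρ₁ ρ₂ : Env) : Prop :=
  ∀ x ∈ dom ρ₁ ∪ dom ρ₂, ∃ w₁ w₂,
    ρ₁ x = some w₁ ∧ ρ₂ x = some w₂ ∧ ValRel alloc n S w₁ w₂

end DDuo

namespace DDuo

/-- Step-index weakening for values. -/
theorem ValRel.weaken (alloc : Set Loc → Loc) {n' n : ℕ} (hn : n' ≤ n) (S : SensEnv) :
    ∀ v₁ v₂ : Value, ValRel alloc n S v₁ v₂ → ValRel alloc n' S v₁ v₂
  | .pair a b, v₂, h => by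
    cases v₂ with
    | pair c d =>
      rw [ValRel] at h ⊢
      exact ⟨ValRel.weaken alloc hn S a c h.1, ValRel.weaken alloc hn S b d h.2⟩
    | _ => simp [ValRel] at h
  | .real r T m, v₂, h => by
    cases v₂ with
    | real r' T' m' => rw [ValRel] at h ⊢; exact h
    | _ => simp [ValRel] at h
  | .closure x e ρ, v₂, h => by
    cases v₂ with
    | closure x' e' ρ' =>
      rw [ValRel] at h ⊢
      exact ⟨h.1, fun k hk => h.2 k (lt_of_lt_of_le hk hn)⟩
    | _ => simp [ValRel] at h
  | .loc l, v₂, h => by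
    cases v₂ with
    | loc l' => rw [ValRel] at h ⊢; exact h
    | _ => simp [ValRel] at h
termination_by v₁ => sizeOf v₁

/-- **Step-index Weakening**: for all step indices `n′ ≤ n` and every
sensitivity environment `Σ`: (1) if `ρ₁ ∼ₙ^Σ ρ₂` then `ρ₁ ∼_{n′}^Σ ρ₂`;
(2) if `σ₁ ∼ₙ^Σ σ₂` then `σ₁ ∼_{n′}^Σ σ₂`; and (3) if
`ρ₁,σ₁,e₁ ∼ₙ^Σ ρ₂,σ₂,e₂` then `ρ₁,σ₁,e₁ ∼_{n′}^Σ ρ₂,σ₂,e₂`. -/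
theorem step_index_weakening
    (alloc : Set Loc → Loc) (n' n : ℕ) (hn : n' ≤ n) (S : SensEnv) :
    (∀ ρ₁ ρ₂ : Env, EnvRel alloc n S ρ₁ ρ₂ → EnvRel alloc n' S ρ₁ ρ₂) ∧
    (∀ σ₁ σ₂ : Store, StoreRel alloc n S σ₁ σ₂ → StoreRel alloc n' S σ₁ σ₂) ∧
    (∀ (ρ₁ ρ₂ : Env) (σ₁ σ₂ : Store) (e₁ e₂ : Expr),
      ConfigRel alloc n S ρ₁ σ₁ e₁ ρ₂ σ₂ e₂ →
      ConfigRel alloc n' S ρ₁ σ₁ e₁ ρ₂ σ₂ e₂) := by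
  have key : ∀ (a b : ℕ), a ≤ b → ∀ σ₁ σ₂ : Store,
      StoreRel alloc b S σ₁ σ₂ → StoreRel alloc a S σ₁ σ₂ := by
    intro a b hab σ₁ σ₂ h l hl
    obtain ⟨w₁, w₂, h₁, h₂, h₃⟩ := h l hl
    exact ⟨w₁, w₂, h₁, h₂, ValRel.weaken alloc hab S _ _ h₃⟩
  refine ⟨key n' n hn, key n' n hn, ?_⟩
  intro ρ₁ ρ₂ σ₁ σ₂ e₁ e₂ h
  cases n' with
  | zero => rw [ConfigRel]; trivial
  | succ k =>
    cases n with
    | zero => omega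
    | succ j =>
      rw [ConfigRel] at h ⊢
      intro n₁ hn₁ n₂ σ₁' σ₂' v₁ v₂ ev₁ ev₂
      obtain ⟨h₁, h₂, h₃⟩ := h n₁ (by omega) n₂ σ₁' σ₂' v₁ v₂ ev₁ ev₂
      exact ⟨h₁, key (k - n₁) (j - n₁) (by omega) _ _ h₂,
        ValRel.weaken alloc (by omega) S _ _ h₃⟩

end DDuo
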